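/- Let V be a finite vertex set, G₀ a simple graph on V, D a nonempty subset of the edge set of G₀, and D' a set of unordered pairs of vertices with the same endpoint set as D (V(D') = V(D)). Let G₁ be the simple graph on V whose edge set is (edgeSet(G₀) ∖ D) ∪ D'. Then w(G₀) ≤ w(G₁) + s(D) − 1, where w denotes the number of connected components of a graph on V and s(D) denotes the number of connected components of the graph with vertex set V(D) and edge set D. Equivalently, the weights satisfy ‖G₁‖ ≤ ‖G₀‖ + (s(D) − 1), where ‖G‖ = |V| − w(G). -/

import Mathlib

/-! Each connected component of `(V(D), D)` lies in a single component of `G₀`, so at most `s(D)`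
components of `G₀` meet `V(D)`. A component of `G₀` that misses `V(D)` contains no endpoint of an
edge of `D'`, hence no vertex outside it is reachable from inside it in `G₁`; it is therefore a union
of components of `G₁` that miss `V(D)`. Moreover, as `D` is
nonempty, at least one component of `G₁` meets `V(D)`. All three facts are packaged in one
surjection from the disjoint union of the components of `G₁` and those of `(V(D), D)` onto
`Option G₀.ConnectedComponent`, where `none` is the image of the components of `G₁` that meet
`V(D)`. -/

/-- The set of endpoints of a set `D` of unordered pairs of vertices. -/
def endpointSet {V : Type*} (D : Set (Sym2 V)) : Set V :=
  {v | ∃ e ∈ D, v ∈ e}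

/-- `s(D)`: the number of connected components of the graph with vertex set the
endpoint set `V(D)` of `D` and edge set `D`. -/
noncomputable def edgeSetComponents {V : Type*} (D : Set (Sym2 V)) : ℕ :=
  Nat.card
    (SimpleGraph.fromEdgeSet
      {e : Sym2 (endpointSet D) | e.map Subtype.val ∈ D}).ConnectedComponent

/-- `G₁`-reachability from a vertex whose `G₀`-component misses `S` stays in that component, provided
every edge of `G₁` is an edge of `G₀` or starts in `S`. -/
theorem reachable_of_component_avoids {V : Type*} {G₀ G₁ : SimpleGraph V} {S : Set V}
    (hadj : ∀ a b, G₁.Adj a b → G₀.Adj a b ∨ a ∈ S) {v u : V}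
    (hv : ∀ x, G₀.Reachable v x → x ∉ S) (h : G₁.Reachable v u) : G₀.Reachable v u := by
  rw [SimpleGraph.reachable_iff_reflTransGen] at h
  induction h with
  | refl => exact SimpleGraph.Reachable.refl _
  | tail _ hbc ih =>
    rcases hadj _ _ hbc with h | h
    · exact ih.trans h.reachable
    · exact absurd h (hv _ ih)

/-- Let `V` be a finite vertex set, `G₀` a simple graph on `V`, `D` a
nonempty subset of the edge set of `G₀`, and `D'` a set of unordered pairs of vertices
with the same endpoint set as `D`. Let `G₁` be the simple graph on `V` with edge set
`(edgeSet G₀ ∖ D) ∪ D'`. Then `w(G₀) ≤ w(G₁) + s(D) − 1`, where `w` is the number of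
connected components; equivalently `‖G₁‖ ≤ ‖G₀‖ + (s(D) − 1)` for the weights
`‖G‖ = |V| − w(G)`. -/
theorem edge_replacement_weight_bound {V : Type*} [Fintype V]
    (G₀ : SimpleGraph V) (D D' : Set (Sym2 V))
    (hD : D ⊆ G₀.edgeSet) (hne : D.Nonempty)
    (hend : endpointSet D' = endpointSet D) :
    Nat.card G₀.ConnectedComponent ≤
      Nat.card (SimpleGraph.fromEdgeSet ((G₀.edgeSet \ D) ∪ D')).ConnectedComponent +
        edgeSetComponents D - 1 := by
  classical
  set G₁ := SimpleGraph.fromEdgeSet ((G₀.edgeSet \ D) ∪ D') with hG₁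
  let H : SimpleGraph (endpointSet D) :=
    SimpleGraph.fromEdgeSet {e : Sym2 (endpointSet D) | e.map Subtype.val ∈ D}
  let φ : H →g G₀ :=
    { toFun := Subtype.val
      map_rel' := fun {a b} hab => hD ((SimpleGraph.fromEdgeSet_adj _).1 hab).1 }
  have hadj : ∀ a b, G₁.Adj a b → G₀.Adj a b ∨ a ∈ endpointSet D := by
    intro a b hab
    rcases ((SimpleGraph.fromEdgeSet_adj _).1 hab).1 with h | h
    · exact Or.inl h.1
    · exact Or.inr (hend ▸ ⟨_, h, Sym2.mem_mk_left a b⟩)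
  let f : G₁.ConnectedComponent ⊕ H.ConnectedComponent → Option G₀.ConnectedComponent :=
    Sum.elim
      (fun C => if ∃ v ∈ endpointSet D, G₁.connectedComponentMk v = C then none
        else some (G₀.connectedComponentMk C.out))
      (fun C => some (C.map φ))
  have hf : Function.Surjective f := by
    rintro (_ | c)
    · obtain ⟨e, he⟩ := hne
      induction e with
      | h a b =>
        have ha : a ∈ endpointSet D := ⟨_, he, Sym2.mem_mk_left a b⟩
        exact ⟨Sum.inl (G₁.connectedComponentMk a), if_pos ⟨a, ha, rfl⟩⟩
    · induction c using SimpleGraph.ConnectedComponent.ind with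
      | h v =>
      by_cases hv : ∃ x, G₀.Reachable v x ∧ x ∈ endpointSet D
      · obtain ⟨x, hvx, hx⟩ := hv
        exact ⟨Sum.inr (H.connectedComponentMk ⟨x, hx⟩),
          congrArg some (SimpleGraph.ConnectedComponent.sound hvx.symm)⟩
      · push Not at hv
        refine ⟨Sum.inl (G₁.connectedComponentMk v), (if_neg ?_).trans (congrArg some ?_)⟩
        · rintro ⟨x, hx, hxv⟩
          exact hv x (reachable_of_component_avoids hadj hv
            (SimpleGraph.ConnectedComponent.exact hxv).symm) hx
        · exact SimpleGraph.ConnectedComponent.sound (reachable_of_component_avoids hadj hv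
            (SimpleGraph.ConnectedComponent.exact (Quot.out_eq _)).symm).symm
  have hcard := Nat.card_le_card_of_surjective f hf
  rw [Finite.card_option, Nat.card_sum] at hcard
  change _ ≤ _ + Nat.card H.ConnectedComponent - 1
  omega
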